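/- The 4-dimensional real algebra M_2(ℝ)^(−), i.e. the space of 2×2 real matrices with multiplication [X,Y] = XY − YX, has length exactly 3; in particular, S = {E_{11} − E_{12}, E_{21} + E_{22}}, where E_{ij} denotes the matrix unit with 1 in position (i,j) and 0 elsewhere, is a generating set of M_2(ℝ)^(−) with l(S) = 3. -/

import Mathlib

/-!
Framework: length of finite-dimensional not necessarily associative,
not necessarily unital algebras (non-unital convention: `L_0(S) = 0`).
The multiplication of the algebra is passed explicitly as a binary
operation `μ`, so that the same definitions apply to an algebra, to its
commutator algebra, to a Lie bracket, etc.
-/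

open Submodule Module

/-- `IsWord μ S k w`: `w` is a product of `k` elements of `S` (with respect to the
multiplication `μ`) with some placement of parentheses. -/
inductive IsWord {A : Type*} (μ : A → A → A) (S : Set A) : ℕ → A → Prop
  | base {a : A} (ha : a ∈ S) : IsWord μ S 1 a
  | mul {m n : ℕ} {a b : A} (ha : IsWord μ S m a) (hb : IsWord μ S n b) :
      IsWord μ S (m + n) (μ a b)

/-- The multiplication of an algebra, as a plain binary operation. -/
def amul (A : Type*) [Mul A] : A → A → A := fun a b => a * b

section
variable (F : Type*) {A : Type*} [Field F] [AddCommGroup A] [Module F A]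

/-- `L_i(S)`: the linear span of all words in `S` of length at most `i`
(non-unital convention, so `L_0(S) = 0`). -/
def Lset (μ : A → A → A) (S : Set A) (i : ℕ) : Submodule F A :=
  Submodule.span F {a | ∃ k, k ≤ i ∧ IsWord μ S k a}

/-- `S` generates the algebra, i.e. the span of all words in `S` is everything. -/
def Generates (μ : A → A → A) (S : Set A) : Prop :=
  Submodule.span F {a | ∃ k, IsWord μ S k a} = ⊤

/-- `l(S)`: the length of a generating set `S`, the least `k` with `L_k(S) = A`. -/
noncomputable def lenSet (μ : A → A → A) (S : Set A) : ℕ :=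
  sInf {k | Lset F μ S k = ⊤}

/-- An irreducible word of length `k` in `S`. -/
def IrredWord (μ : A → A → A) (S : Set A) (k : ℕ) (w : A) : Prop :=
  IsWord μ S k w ∧ ∀ m, m < k → w ∉ Lset F μ S m

end

section
variable {A : Type*}

/-- The set `P(x,y,z)` of monomials. -/
def Pset (μ : A → A → A) (x y z : A) : Set A :=
  {μ (μ x z) y, μ (μ z x) y, μ (μ y z) x, μ (μ z y) x,
   μ x (μ z y), μ x (μ y z), μ y (μ x z), μ y (μ z x),
   μ x y, μ y x, μ x z, μ z x, μ y z, μ z y, x, y, z}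

/-- The set `Q_l(x,y,z)` of monomials. -/
def Qlset (μ : A → A → A) (x y z : A) : Set A :=
  {μ x (μ z y), μ x (μ y z), μ y (μ x z), μ y (μ z x),
   μ x y, μ y x, μ x z, μ z x, μ y z, μ z y, x, y, z}

/-- The set `Q_r(x,y,z)` of monomials. -/
def Qrset (μ : A → A → A) (x y z : A) : Set A :=
  {μ (μ x z) y, μ (μ z x) y, μ (μ y z) x, μ (μ z y) x,
   μ x y, μ y x, μ x z, μ z x, μ y z, μ z y, x, y, z}

end

section
variable (F : Type*) {A : Type*} [Field F] [AddCommGroup A] [Module F A]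

/-- A mixing algebra: `(xy)z` and `z(xy)` lie in the span of `P(x,y,z)`. -/
def IsMixing (μ : A → A → A) : Prop :=
  ∀ x y z : A, μ (μ x y) z ∈ Submodule.span F (Pset μ x y z) ∧
    μ z (μ x y) ∈ Submodule.span F (Pset μ x y z)

/-- A sliding algebra: either `z(xy)` always lies in the span of `Q_r(x,y,z)`, or
`(xy)z` always lies in the span of `Q_l(x,y,z)`. -/
def IsSliding (μ : A → A → A) : Prop :=
  (∀ x y z : A, μ z (μ x y) ∈ Submodule.span F (Qrset μ x y z)) ∨
  (∀ x y z : A, μ (μ x y) z ∈ Submodule.span F (Qlset μ x y z))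

end

/-!
In a Lie algebra the chain `L_1(S) ≤ L_2(S) ≤ ⋯` is strictly increasing until it reaches its final
value: by the Jacobi identity, a subspace containing `S` and stable under bracketing with `S` is
stable under bracketing with every word. If `S` generates a Lie algebra of dimension at least two,
then `L_1(S)` has dimension at least two, since the elements of a line commute. Hence in dimension
four the length is at most three. Conversely `L_2({a, b})` is spanned by `a`, `b` and `⁅a, b⁆`, so
no pair of generators of a four-dimensional Lie algebra has length less than three.
-/

section Words

variable {A : Type*} {μ : A → A → A} {S : Set A}

lemma IsWord.one_le {k : ℕ} {w : A} (hw : IsWord μ S k w) : 1 ≤ k := by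
  induction hw with
  | base => exact le_rfl
  | mul _ _ ih _ => exact Nat.le_add_right_of_le ih

lemma isWord_one_iff {w : A} : IsWord μ S 1 w ↔ w ∈ S := by
  refine ⟨fun hw => ?_, .base⟩
  generalize hk : 1 = k at hw
  cases hw with
  | base ha => exact ha
  | mul ha hb => have := ha.one_le; have := hb.one_le; omega

lemma isWord_two_iff {w : A} : IsWord μ S 2 w ↔ w ∈ Set.image2 μ S S := by
  refine ⟨fun hw => ?_, fun ⟨a, ha, b, hb, hw⟩ => hw ▸ .mul (.base ha) (.base hb)⟩
  generalize hk : 2 = k at hw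
  cases hw with
  | base => omega
  | @mul m n a b ha hb =>
    obtain ⟨rfl, rfl⟩ : m = 1 ∧ n = 1 := by have := ha.one_le; have := hb.one_le; omega
    exact Set.mem_image2_of_mem (isWord_one_iff.mp ha) (isWord_one_iff.mp hb)

end Words

section Filtration

variable {F A : Type*} [Field F] [AddCommGroup A] [Module F A] {μ : A → A → A} {S : Set A}

lemma IsWord.mem_Lset {k n : ℕ} {w : A} (hw : IsWord μ S k w) (hkn : k ≤ n) : w ∈ Lset F μ S n :=
  subset_span ⟨k, hkn, hw⟩

lemma subset_Lset {k : ℕ} (hk : 1 ≤ k) : S ⊆ Lset F μ S k :=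
  fun _ hs => (IsWord.base hs).mem_Lset hk

variable (F μ S) in
lemma Lset_mono : Monotone (Lset F μ S) :=
  fun _ _ hij => span_mono fun _ ⟨k, hk, hw⟩ => ⟨k, hk.trans hij, hw⟩

lemma Lset_two_le {M : Submodule F A} (hS : S ⊆ M) (hμ : Set.image2 μ S S ⊆ M) :
    Lset F μ S 2 ≤ M := by
  refine span_le.mpr fun w ⟨k, hk, hw⟩ => ?_
  have := hw.one_le
  obtain rfl | rfl : k = 1 ∨ k = 2 := by omega
  · exact hS (isWord_one_iff.mp hw)
  · exact hμ (isWord_two_iff.mp hw)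

lemma lenSet_le {k : ℕ} (hk : Lset F μ S k = ⊤) : lenSet F μ S ≤ k :=
  Nat.sInf_le hk

-- Pitfall: `sInf ∅ = 0` gives `lenSet F μ S = 0` when no `L_n(S)` is the whole algebra.
lemma lt_lenSet {k n : ℕ} (hn : Lset F μ S n = ⊤) (hk : Lset F μ S k ≠ ⊤) : k < lenSet F μ S := by
  have hlen : Lset F μ S (lenSet F μ S) = ⊤ := Nat.sInf_mem (s := {k | Lset F μ S k = ⊤}) ⟨n, hn⟩
  contrapose! hk
  exact top_le_iff.mp (hlen.ge.trans (Lset_mono F μ S hk))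

end Filtration

section LieAlgebra

variable {F L : Type*} [Field F] [LieRing L] [LieAlgebra F L] {S : Set L}

lemma IsWord.lie_mem {M : Submodule F L} (hM : ∀ s ∈ S, ∀ x ∈ M, ⁅s, x⁆ ∈ M) {k : ℕ} {w : L}
    (hw : IsWord (⁅·, ·⁆) S k w) : ∀ x ∈ M, ⁅w, x⁆ ∈ M := by
  induction hw with
  | base hs => exact hM _ hs
  | mul _ _ iha ihb =>
    intro x hx
    rw [lie_lie]
    exact M.sub_mem (iha _ (ihb x hx)) (ihb _ (iha x hx))

lemma Generates.eq_top_of_lie_mem (hS : Generates F (⁅·, ·⁆) S) {M : Submodule F L} (hSM : S ⊆ M)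
    (hM : ∀ s ∈ S, ∀ x ∈ M, ⁅s, x⁆ ∈ M) : M = ⊤ := by
  rw [eq_top_iff, ← hS, span_le]
  rintro w ⟨k, hw⟩
  induction hw with
  | base hs => exact hSM hs
  | mul ha _ _ ihb => exact ha.lie_mem hM _ ihb

lemma lie_mem_Lset_succ {s x : L} {k : ℕ} (hs : s ∈ S) (hx : x ∈ Lset F (⁅·, ·⁆) S k) :
    ⁅s, x⁆ ∈ Lset F (⁅·, ·⁆) S (k + 1) := by
  induction hx using span_induction with
  | mem w hw =>
    obtain ⟨n, hn, hw⟩ := hw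
    exact (IsWord.mul (.base hs) hw).mem_Lset (by omega)
  | zero => simp
  | add x y _ _ hx hy => rw [lie_add]; exact add_mem hx hy
  | smul c x _ hx => rw [lie_smul]; exact smul_mem _ c hx

lemma Generates.Lset_lt_Lset_succ (hS : Generates F (⁅·, ·⁆) S) {k : ℕ}
    (htop : Lset F (⁅·, ·⁆) S k ≠ ⊤) : Lset F (⁅·, ·⁆) S k < Lset F (⁅·, ·⁆) S (k + 1) := by
  refine (Lset_mono F _ S k.le_succ).lt_of_ne fun heq => htop ?_
  exact hS.eq_top_of_lie_mem (heq ▸ subset_Lset k.succ_pos)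
    fun s hs x hx => heq ▸ lie_mem_Lset_succ hs hx

lemma lie_eq_zero_of_finrank_le_one {M : Submodule F L} [FiniteDimensional F M]
    (hM : finrank F M ≤ 1) {x y : L} (hx : x ∈ M) (hy : y ∈ M) : ⁅x, y⁆ = 0 := by
  obtain ⟨v, hv⟩ := finrank_le_one_iff.mp hM
  obtain ⟨c, hc⟩ := hv ⟨x, hx⟩
  obtain ⟨d, hd⟩ := hv ⟨y, hy⟩
  obtain rfl : c • (v : L) = x := congrArg Subtype.val hc
  obtain rfl : d • (v : L) = y := congrArg Subtype.val hd
  simp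

lemma Lset_two_pair_le (a b : L) : Lset F (⁅·, ·⁆) {a, b} 2 ≤ span F {a, b, ⁅a, b⁆} := by
  have ha : a ∈ span F {a, b, ⁅a, b⁆} := subset_span (by simp)
  have hb : b ∈ span F {a, b, ⁅a, b⁆} := subset_span (by simp)
  have hab : ⁅a, b⁆ ∈ span F {a, b, ⁅a, b⁆} := subset_span (by simp)
  have hba : ⁅b, a⁆ ∈ span F {a, b, ⁅a, b⁆} := lie_skew b a ▸ neg_mem hab
  refine Lset_two_le ?_ ?_
  · rintro _ (rfl | rfl) <;> assumption
  · rintro _ ⟨_, rfl | rfl, _, rfl | rfl, rfl⟩ <;> simp_all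

lemma Lset_two_pair_ne_top (hL : 3 < finrank F L) (a b : L) : Lset F (⁅·, ·⁆) {a, b} 2 ≠ ⊤ := by
  classical
  intro htop
  have hspan : span F (({a, b, ⁅a, b⁆} : Finset L) : Set L) = ⊤ := by
    simpa [htop] using Lset_two_pair_le (F := F) a b
  have hcard : finrank F L ≤ 3 := calc
    finrank F L = finrank F (span F (({a, b, ⁅a, b⁆} : Finset L) : Set L)) := by
      rw [hspan, finrank_top]
    _ ≤ _ := finrank_span_finset_le_card _
    _ ≤ 3 := Finset.card_le_three
  omega

variable [FiniteDimensional F L]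

lemma Generates.one_lt_finrank_Lset_one (hS : Generates F (⁅·, ·⁆) S)
    (htop : Lset F (⁅·, ·⁆) S 1 ≠ ⊤) : 1 < finrank F (Lset F (⁅·, ·⁆) S 1) := by
  contrapose! htop
  refine hS.eq_top_of_lie_mem (subset_Lset le_rfl) fun s hs x hx => ?_
  rw [lie_eq_zero_of_finrank_le_one htop (subset_Lset le_rfl hs) hx]
  exact zero_mem _

lemma Generates.lt_finrank_Lset (hS : Generates F (⁅·, ·⁆) S) {k : ℕ} (hk : 1 ≤ k)
    (htop : Lset F (⁅·, ·⁆) S k ≠ ⊤) : k < finrank F (Lset F (⁅·, ·⁆) S k) := by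
  induction k, hk using Nat.le_induction with
  | base => exact hS.one_lt_finrank_Lset_one htop
  | succ k _ ih =>
    have htop' : Lset F (⁅·, ·⁆) S k ≠ ⊤ :=
      ne_top_of_le_ne_top htop (Lset_mono F _ S k.le_succ)
    exact Nat.lt_of_le_of_lt (ih htop') (finrank_lt_finrank_of_lt (hS.Lset_lt_Lset_succ htop'))

lemma Generates.Lset_eq_top_of_finrank_le (hS : Generates F (⁅·, ·⁆) S) {k : ℕ} (hk : 1 ≤ k)
    (hL : finrank F L ≤ k + 1) : Lset F (⁅·, ·⁆) S k = ⊤ := by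
  by_contra htop
  exact htop (eq_top_of_finrank_eq
    (le_antisymm (finrank_le _) (hL.trans (hS.lt_finrank_Lset hk htop))))

lemma Generates.lenSet_pair_eq_three {a b : L} (hab : Generates F (⁅·, ·⁆) {a, b})
    (hL : finrank F L = 4) : lenSet F (⁅·, ·⁆) {a, b} = 3 := by
  have htop : Lset F (⁅·, ·⁆) {a, b} 3 = ⊤ := hab.Lset_eq_top_of_finrank_le (by simp) hL.le
  exact le_antisymm (lenSet_le htop) (lt_lenSet htop (Lset_two_pair_ne_top (by simp [hL]) a b))

end LieAlgebra

section Matrix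

attribute [local instance] LieRing.ofAssociativeRing LieAlgebra.ofAssociativeAlgebra

variable {F : Type*} [Field F]

lemma eq_top_of_single_mem {m n R : Type*} [Finite m] [Finite n] [DecidableEq m] [DecidableEq n]
    [Semiring R] {M : Submodule R (Matrix m n R)} (hM : ∀ i j, Matrix.single i j 1 ∈ M) :
    M = ⊤ := by
  cases nonempty_fintype m
  rw [eq_top_iff, ← (Matrix.stdBasis R m n).span_eq, span_le, Set.range_subset_iff]
  exact fun ⟨i, j⟩ => Matrix.stdBasis_eq_single R i j ▸ hM i j

lemma generates_matrix_pair [NeZero (2 : F)] :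
    Generates F (⁅·, ·⁆) {(!![1, -1; 0, 0] : Matrix (Fin 2) (Fin 2) F), !![0, 0; 1, 1]} := by
  set S : Set (Matrix (Fin 2) (Fin 2) F) := {!![1, -1; 0, 0], !![0, 0; 1, 1]}
  set M := span F {w | ∃ k, IsWord (⁅·, ·⁆) S k w}
  have mem_M {k : ℕ} {w} (hw : IsWord (⁅·, ·⁆) S k w) : w ∈ M := subset_span ⟨k, hw⟩
  have ha : IsWord (⁅·, ·⁆) S 1 !![1, -1; 0, 0] := .base (by simp [S])
  have hb : IsWord (⁅·, ·⁆) S 1 !![0, 0; 1, 1] := .base (by simp [S])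
  have hab : IsWord (⁅·, ·⁆) S 2 !![-1, -1; -1, 1] := by
    convert ha.mul hb using 1
    simp [Ring.lie_def]
  have haab : IsWord (⁅·, ·⁆) S 3 !![1, -3; 1, -1] := by
    convert ha.mul hab using 1
    norm_num [Ring.lie_def, Matrix.empty_eq]
  have h2 : (2 : F) ≠ 0 := two_ne_zero
  have h₀₁ : !![0, 1; 0, 0] ∈ M := by
    refine (M.smul_mem_iff (neg_ne_zero.mpr (mul_ne_zero h2 h2))).mp ?_
    convert add_mem (mem_M hab) (mem_M haab) using 1
    norm_num
  have h₀₀ : !![1, 0; 0, 0] ∈ M := by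
    convert add_mem (mem_M ha) h₀₁ using 1
    simp
  have h₁₁ : !![0, 0; 0, 1] ∈ M := by
    refine (M.smul_mem_iff h2).mp ?_
    convert add_mem (add_mem h₀₀ h₀₁) (add_mem (mem_M hb) (mem_M hab)) using 1
    norm_num
  have h₁₀ : !![0, 0; 1, 0] ∈ M := by
    convert sub_mem (mem_M hb) h₁₁ using 1
    simp
  refine eq_top_of_single_mem fun i j => ?_
  rw [(Matrix.single i j (1 : F)).eta_fin_two]
  fin_cases i <;> fin_cases j <;> simpa

theorem m2_commutator_length_eq_three_general [NeZero (2 : F)] :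
    (∀ S : Set (Matrix (Fin 2) (Fin 2) F),
      Generates F (fun X Y : Matrix (Fin 2) (Fin 2) F => X * Y - Y * X) S →
      lenSet F (fun X Y : Matrix (Fin 2) (Fin 2) F => X * Y - Y * X) S ≤ 3) ∧
    Generates F (fun X Y : Matrix (Fin 2) (Fin 2) F => X * Y - Y * X)
      {!![1, -1; 0, 0], !![0, 0; 1, 1]} ∧
    lenSet F (fun X Y : Matrix (Fin 2) (Fin 2) F => X * Y - Y * X)
      {!![1, -1; 0, 0], !![0, 0; 1, 1]} = 3 := by
  have hdim : finrank F (Matrix (Fin 2) (Fin 2) F) = 4 := by simp [finrank_matrix]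
  simp only [← Ring.lie_def]
  exact ⟨fun S hS => lenSet_le (hS.Lset_eq_top_of_finrank_le (by simp) hdim.le),
    generates_matrix_pair, generates_matrix_pair.lenSet_pair_eq_three hdim⟩

end Matrix

/-- the algebra `M_2(ℝ)⁽⁻⁾` (2×2 real matrices with multiplication
`[X,Y] = XY − YX`) has length exactly 3; in particular the set
`S = {E₁₁ − E₁₂, E₂₁ + E₂₂}` generates it and `l(S) = 3`. -/
theorem m2_commutator_length_eq_three :
    (∀ S : Set (Matrix (Fin 2) (Fin 2) ℝ), S.Finite →
      Generates ℝ (fun X Y : Matrix (Fin 2) (Fin 2) ℝ => X * Y - Y * X) S →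
      lenSet ℝ (fun X Y : Matrix (Fin 2) (Fin 2) ℝ => X * Y - Y * X) S ≤ 3) ∧
    (({!![(1 : ℝ), -1; 0, 0], !![(0 : ℝ), 0; 1, 1]} :
        Set (Matrix (Fin 2) (Fin 2) ℝ)).Finite ∧
      Generates ℝ (fun X Y : Matrix (Fin 2) (Fin 2) ℝ => X * Y - Y * X)
        {!![(1 : ℝ), -1; 0, 0], !![(0 : ℝ), 0; 1, 1]} ∧
      lenSet ℝ (fun X Y : Matrix (Fin 2) (Fin 2) ℝ => X * Y - Y * X)
        {!![(1 : ℝ), -1; 0, 0], !![(0 : ℝ), 0; 1, 1]} = 3) :=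
  ⟨fun S _ => m2_commutator_length_eq_three_general.1 S, Set.toFinite _,
    m2_commutator_length_eq_three_general.2⟩
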